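/- Let (X,d) be a metric space and ν a Borel probability measure on X satisfying the Gaussian enlargement property with parameter τ > 0. Let A, B ⊆ X be Borel sets with D := d(A,B) > 0 and 0 < ν(A) < 1, 0 < ν(B) < 1. Then Φ⁻¹(ν(A)) + Φ⁻¹(ν(B)) ≤ -D/√(2τ); consequently ν(A)·ν(B) ≤ Φ(-D/(2√(2τ)))² ≤ exp(-D²/(8τ)). -/

import Mathlib

open Real MeasureTheory

/-- The standard Gaussian density. -/
noncomputable def gaussPdf (z : ℝ) : ℝ := (Real.sqrt (2 * Real.pi))⁻¹ * Real.exp (-z ^ 2 / 2)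

/-- The standard normal CDF. -/
noncomputable def Phi (r : ℝ) : ℝ := ∫ z in Set.Iic r, gaussPdf z

/-- The inverse of the standard normal CDF. -/
noncomputable def PhiInv : ℝ → ℝ := Function.invFun Phi

/-- The open `r`-enlargement `E_r = {y : d(y,E) < r}` of a set (with `E_0 = E`). -/
noncomputable def enlarge {X : Type*} [MetricSpace X] (E : Set X) (r : ℝ) : Set X :=
  if r = 0 then E else Metric.thickening r E

/-- A Borel probability measure `ν` on a metric space satisfies the Gaussian enlargement
property with parameter `τ > 0` if for every Borel set `E` with `0 < ν(E) < 1` and every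
`r ≥ 0`, `ν(E_r) ≥ Φ(Φ⁻¹(ν(E)) + r/√(2τ))`. -/
def GaussianEnlargement {X : Type*} [MetricSpace X] [MeasurableSpace X]
    (ν : Measure X) (τ : ℝ) : Prop :=
  ∀ E : Set X, MeasurableSet E → 0 < ν E → ν E < 1 → ∀ r : ℝ, 0 ≤ r →
    ENNReal.ofReal (Phi (PhiInv (ν E).toReal + r / Real.sqrt (2 * τ))) ≤ ν (enlarge E r)

/-- The distance `d(A,B) = inf {d(a,b) : a ∈ A, b ∈ B}` between two sets. -/
noncomputable def setDist {X : Type*} [MetricSpace X] (A B : Set X) : ℝ :=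
  sInf (Set.image2 dist A B)

lemma gaussPdf_eq (z : ℝ) : gaussPdf z = ProbabilityTheory.gaussianPDFReal 0 1 z := by
  simp [gaussPdf, ProbabilityTheory.gaussianPDFReal]

lemma gaussPdf_pos (z : ℝ) : 0 < gaussPdf z := by
  unfold gaussPdf; positivity

lemma gaussPdf_cont : Continuous gaussPdf := by
  unfold gaussPdf; fun_prop

lemma gaussPdf_int : Integrable gaussPdf := by
  have := ProbabilityTheory.integrable_gaussianPDFReal 0 1
  exact this.congr (Filter.Eventually.of_forall fun z => (gaussPdf_eq z).symm)

lemma gaussPdf_one : ∫ z, gaussPdf z = 1 := by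
  simp_rw [gaussPdf_eq]
  exact ProbabilityTheory.integral_gaussianPDFReal_eq_one 0 one_ne_zero

lemma Phi_deriv (x : ℝ) : HasDerivAt Phi (gaussPdf x) x := by
  have h : Phi = fun y => Phi 0 + ∫ z in (0:ℝ)..y, gaussPdf z := by
    funext y
    rw [← intervalIntegral.integral_Iic_sub_Iic gaussPdf_int.integrableOn gaussPdf_int.integrableOn]
    simp [Phi]
  rw [h]
  apply HasDerivAt.const_add
  exact intervalIntegral.integral_hasDerivAt_right
    (gaussPdf_int.intervalIntegrable) (gaussPdf_cont.stronglyMeasurableAtFilter _ _)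
    gaussPdf_cont.continuousAt

lemma Phi_cont : Continuous Phi :=
  continuous_iff_continuousAt.2 fun x => (Phi_deriv x).continuousAt

lemma Phi_strictMono : StrictMono Phi :=
  strictMono_of_deriv_pos fun x => by rw [(Phi_deriv x).deriv]; exact gaussPdf_pos x

lemma Phi_nonneg (x : ℝ) : 0 ≤ Phi x :=
  setIntegral_nonneg measurableSet_Iic fun z _ => (gaussPdf_pos z).le

lemma Phi_pos (x : ℝ) : 0 < Phi x :=
  (Phi_nonneg (x - 1)).trans_lt (Phi_strictMono (by linarith))

lemma Phi_neg (x : ℝ) : Phi (-x) = 1 - Phi x := by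
  have h1 : Phi (-x) = ∫ z in Set.Ioi x, gaussPdf z := by
    unfold Phi
    rw [← integral_comp_neg_Ioi]
    simp [gaussPdf]
  have h2 := intervalIntegral.integral_Iic_add_Ioi (b := x) (μ := volume)
    gaussPdf_int.integrableOn gaussPdf_int.integrableOn
  rw [gaussPdf_one] at h2
  rw [h1]; unfold Phi; linarith

lemma Phi_tail (s : ℝ) (hs : 0 ≤ s) : Phi (-s) ≤ exp (-s ^ 2 / 2) := by
  have hi : Integrable fun z => exp (-s ^ 2 / 2) * gaussPdf (z + s) :=
    (gaussPdf_int.comp_add_right s).const_mul _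
  calc Phi (-s) ≤ ∫ z in Set.Iic (-s), exp (-s ^ 2 / 2) * gaussPdf (z + s) := by
        apply setIntegral_mono_on gaussPdf_int.integrableOn hi.integrableOn measurableSet_Iic
        intro z hz
        unfold gaussPdf
        rw [mul_left_comm, ← exp_add]
        gcongr
        have : z ≤ -s := hz
        nlinarith
    _ ≤ ∫ z, exp (-s ^ 2 / 2) * gaussPdf (z + s) :=
        setIntegral_le_integral hi (Filter.Eventually.of_forall fun z => by
          have := gaussPdf_pos (z + s)
          simp only [Pi.zero_apply]; positivity)
    _ = exp (-s ^ 2 / 2) := by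
        rw [integral_const_mul, integral_add_right_eq_self gaussPdf s, gaussPdf_one, mul_one]

lemma Phi_shift (x c : ℝ) : Phi (x + c) = ∫ z in Set.Iic x, gaussPdf (z + c) := by
  unfold Phi
  have := (measurePreserving_add_right volume c).setIntegral_preimage_emb
    (measurableEmbedding_addRight c) gaussPdf (Set.Iic (x + c))
  rw [← this]
  congr 2
  ext z; simp

lemma ratio (u v : ℝ) (h : u ≤ v) : gaussPdf v * Phi u ≤ gaussPdf u * Phi v := by
  have e1 : Phi u = ∫ z in Set.Iic 0, gaussPdf (z + u) := by rw [← Phi_shift, zero_add]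
  have e2 : Phi v = ∫ z in Set.Iic 0, gaussPdf (z + v) := by rw [← Phi_shift, zero_add]
  rw [e1, e2, ← integral_const_mul, ← integral_const_mul]
  apply setIntegral_mono_on ((gaussPdf_int.comp_add_right u).const_mul _).integrableOn
    ((gaussPdf_int.comp_add_right v).const_mul _).integrableOn measurableSet_Iic
  intro z hz
  have hz : z ≤ 0 := hz
  unfold gaussPdf
  rw [mul_mul_mul_comm _ _ _ (Real.exp (-(z + u) ^ 2 / 2)), mul_mul_mul_comm _ _ _ (Real.exp (-(z + v) ^ 2 / 2)), ← exp_add, ← exp_add]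
  gcongr _ * exp ?_
  nlinarith

lemma Phi_prod (m t : ℝ) (ht : 0 ≤ t) : Phi (m + t) * Phi (m - t) ≤ Phi m ^ 2 := by
  have hd : ∀ t, HasDerivAt (fun t => Phi (m + t) * Phi (m - t))
      (gaussPdf (m + t) * Phi (m - t) + Phi (m + t) * -gaussPdf (m - t)) t := by
    intro t
    apply HasDerivAt.mul
    · exact (Phi_deriv (m + t)).comp_const_add m t
    · exact (Phi_deriv (m - t)).comp_const_sub m t
  have ha : AntitoneOn (fun t => Phi (m + t) * Phi (m - t)) (Set.Ici 0) := by
    apply antitoneOn_of_deriv_nonpos (convex_Ici 0)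
    · exact fun t _ => (hd t).continuousAt.continuousWithinAt
    · exact fun t _ => (hd t).differentiableAt.differentiableWithinAt
    · intro t ht
      rw [interior_Ici] at ht
      have ht : 0 < t := ht
      rw [(hd t).deriv]
      linarith [ratio (m - t) (m + t) (by linarith)]
  have := ha (Set.mem_Ici.2 le_rfl) (Set.mem_Ici.2 ht) ht
  simpa [sq] using this

lemma Phi_prod' (a b : ℝ) : Phi a * Phi b ≤ Phi ((a + b) / 2) ^ 2 := by
  rcases le_total b a with h | h
  · have := Phi_prod ((a + b) / 2) ((a - b) / 2) (by linarith)
    convert this using 3 <;> ring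
  · have := Phi_prod ((a + b) / 2) ((b - a) / 2) (by linarith)
    rw [mul_comm]
    convert this using 3 <;> ring

lemma Phi_PhiInv (p : ℝ) (h0 : 0 < p) (h1 : p < 1) : Phi (PhiInv p) = p := by
  apply Function.invFun_eq
  have key : ∀ q : ℝ, 0 < q → ∃ x, 0 ≤ x ∧ Phi (-x) < q := by
    intro q hq
    have ht : Filter.Tendsto (fun s : ℝ => exp (-s ^ 2 / 2)) Filter.atTop (nhds 0) := by
      apply tendsto_exp_atBot.comp
      have : Filter.Tendsto (fun s : ℝ => s ^ 2 / 2) Filter.atTop Filter.atTop :=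
        (Filter.tendsto_pow_atTop two_ne_zero).atTop_div_const two_pos
      exact (Filter.tendsto_neg_atTop_atBot.comp this).congr fun s => by simp [neg_div]
    obtain ⟨x, hx, hx0⟩ := ((ht.eventually (gt_mem_nhds hq)).and
      (Filter.eventually_ge_atTop 0)).exists
    exact ⟨x, hx0, (Phi_tail x hx0).trans_lt hx⟩
  obtain ⟨x, -, hx⟩ := key p h0
  obtain ⟨y, -, hy⟩ := key (1 - p) (by linarith)
  rw [Phi_neg] at hy
  exact mem_range_of_exists_le_of_exists_ge Phi_cont ⟨-x, hx.le⟩ ⟨y, by linarith⟩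

/-- Two-set concentration: if `ν` satisfies the Gaussian enlargement property with
parameter `τ`, and `A, B` are Borel sets with `d(A,B) > 0` and measures in `(0,1)`, then
`Φ⁻¹(ν(A)) + Φ⁻¹(ν(B)) ≤ -d(A,B)/√(2τ)`; consequently
`ν(A)ν(B) ≤ Φ(-d(A,B)/(2√(2τ)))² ≤ exp(-d(A,B)²/(8τ))`. -/
theorem stmt11 {X : Type*} [MetricSpace X] [MeasurableSpace X] [BorelSpace X]
    (ν : Measure X) [IsProbabilityMeasure ν] (τ : ℝ) (hτ : 0 < τ)
    (hGEP : GaussianEnlargement ν τ)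
    (A B : Set X) (hA : MeasurableSet A) (hB : MeasurableSet B)
    (hD : 0 < setDist A B)
    (hA0 : 0 < ν A) (hA1 : ν A < 1) (hB0 : 0 < ν B) (hB1 : ν B < 1) :
    PhiInv (ν A).toReal + PhiInv (ν B).toReal ≤ -(setDist A B) / Real.sqrt (2 * τ) ∧
    (ν A).toReal * (ν B).toReal ≤ (Phi (-(setDist A B) / (2 * Real.sqrt (2 * τ)))) ^ 2 ∧
    (Phi (-(setDist A B) / (2 * Real.sqrt (2 * τ)))) ^ 2 ≤
      Real.exp (-(setDist A B) ^ 2 / (8 * τ)) := by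
  have hAr0 : 0 < (ν A).toReal := ENNReal.toReal_pos hA0.ne' (measure_ne_top _ _)
  have hBr0 : 0 < (ν B).toReal := ENNReal.toReal_pos hB0.ne' (measure_ne_top _ _)
  have hAr1 : (ν A).toReal < 1 := by
    simpa using (ENNReal.toReal_lt_toReal (measure_ne_top _ _) ENNReal.one_ne_top).2 hA1
  have hBr1 : (ν B).toReal < 1 := by
    simpa using (ENNReal.toReal_lt_toReal (measure_ne_top _ _) ENNReal.one_ne_top).2 hB1
  have hs : 0 < Real.sqrt (2 * τ) := Real.sqrt_pos.2 (by linarith)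
  have hs2 : Real.sqrt (2 * τ) ^ 2 = 2 * τ := Real.sq_sqrt (by linarith)
  have ea := Phi_PhiInv _ hAr0 hAr1
  have eb := Phi_PhiInv _ hBr0 hBr1
  have h1 := hGEP A hA hA0 hA1 _ hD.le
  rw [enlarge, if_neg hD.ne'] at h1
  have hdisj : Disjoint (Metric.thickening (setDist A B) A) B := by
    rw [Set.disjoint_left]
    intro x hx hxB
    obtain ⟨z, hz, hzd⟩ := Metric.mem_thickening_iff.1 hx
    have : setDist A B ≤ dist z x :=
      csInf_le ⟨0, by rintro _ ⟨p, _, q, _, rfl⟩; exact dist_nonneg⟩ ⟨z, hz, x, hxB, rfl⟩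
    rw [dist_comm] at this
    linarith
  have h2 : (ν (Metric.thickening (setDist A B) A)).toReal + (ν B).toReal ≤ 1 := by
    rw [← ENNReal.toReal_add (measure_ne_top _ _) (measure_ne_top _ _),
      ← measure_union hdisj hB]
    exact measureReal_le_one
  have h3 := (ENNReal.ofReal_le_iff_le_toReal (measure_ne_top _ _)).1 h1
  have h4 : Phi (PhiInv (ν A).toReal + setDist A B / Real.sqrt (2 * τ)) ≤
      Phi (-PhiInv (ν B).toReal) := by
    rw [Phi_neg, eb]; linarith
  have h5 := Phi_strictMono.le_iff_le.1 h4
  have hsum : PhiInv (ν A).toReal + PhiInv (ν B).toReal ≤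
      -(setDist A B) / Real.sqrt (2 * τ) := by
    rw [neg_div]; linarith
  refine ⟨hsum, ?_, ?_⟩
  · calc (ν A).toReal * (ν B).toReal
        = Phi (PhiInv (ν A).toReal) * Phi (PhiInv (ν B).toReal) := by rw [ea, eb]
      _ ≤ _ := Phi_prod' _ _
      _ ≤ _ := by
        apply pow_le_pow_left₀ (Phi_nonneg _)
        apply Phi_strictMono.monotone
        have : -(setDist A B) / (2 * Real.sqrt (2 * τ)) =
            (-(setDist A B) / Real.sqrt (2 * τ)) / 2 := by
          rw [div_div, mul_comm]
        rw [this]; linarith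
  · have h6 := Phi_tail (setDist A B / (2 * Real.sqrt (2 * τ))) (by positivity)
    rw [neg_div]
    calc _ ≤ _ := pow_le_pow_left₀ (Phi_nonneg _) h6 2
      _ = _ := by
        rw [← Real.exp_nat_mul]
        congr 1
        rw [div_pow, mul_pow, hs2]
        push_cast
        field_simp
        ring
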